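/- Every multiarrangement (A,m) of rank 2 is free, and for a rank-2 multiarrangement with |A| = 2 hyperplanes H_1, H_2 the exponents are (m(H_1), m(H_2)). -/

import Mathlib

/-!
For linearly independent hyperplanes with linear forms `α_i`, extended to a basis, the derivations
`α_i ^ m_i • ∂/∂α_i` form a basis of `D(A,m)`, which settles two hyperplanes.

In general, multiplicities are raised one at a time from `m = 0`. Let `α` be the form whose
multiplicity grows from `n` to `n + 1`, and `θ_1, …, θ_ℓ` a basis of `D(A,m)`. In rank two all
coefficients can be kept binary forms, and a binary form modulo `α` is a scalar times a power of a
second linear form. So, if `θ_k` has least degree among the `θ_i` with `α ^ (n + 1) ∤ θ_i(α)`,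
subtracting homogeneous multiples of it from the others makes it the only such derivation, and
replacing it by `α • θ_k` then gives a basis for the raised multiplicity. If there is no such `θ_i`,
the basis need not be changed.
-/

open scoped Classical
open MvPolynomial

namespace ArrPaper

variable {K : Type*} [Field K] {ℓ : ℕ}

/-- The coordinate ring `S = K[x₁,…,x_ℓ]`. -/
noncomputable abbrev S (K : Type*) [Field K] (ℓ : ℕ) := MvPolynomial (Fin ℓ) K

/-- The linear form associated to a covector `c`. -/
noncomputable def linForm (c : Fin ℓ → K) : S K ℓ :=
  ∑ i, MvPolynomial.C (c i) * MvPolynomial.X i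

/-- The linear functional associated to a covector. -/
noncomputable def toFunc (c : Fin ℓ → K) : (Fin ℓ → K) →ₗ[K] K :=
  ∑ i, c i • LinearMap.proj i

/-- A (central) hyperplane arrangement, given by a finite set of nonzero,
pairwise non-proportional covectors (defining linear forms). -/
structure Arrangement (K : Type*) [Field K] (ℓ : ℕ) where
  hyps : Finset (Fin ℓ → K)
  ne_zero : ∀ c ∈ hyps, c ≠ 0
  nonparallel : ∀ c ∈ hyps, ∀ c' ∈ hyps, c ≠ c' → ∀ t : K, c' ≠ t • c

/-- Derivations of the polynomial ring `S`. -/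
abbrev Der (K : Type*) [Field K] (ℓ : ℕ) := Derivation K (S K ℓ) (S K ℓ)

/-- `θ` is a logarithmic derivation of the multiarrangement `(A, m)`, i.e.
`θ(α_H) ∈ α_H^{m(H)}·S` for all `H ∈ A`. -/
def IsLogDer (A : Arrangement K ℓ) (m : (Fin ℓ → K) → ℕ) (θ : Der K ℓ) : Prop :=
  ∀ c ∈ A.hyps, (linForm c) ^ (m c) ∣ θ (linForm c)

/-- `θ` is homogeneous of polynomial degree `d`: `θ(α)` is homogeneous of degree `d`
for every linear form `α`. -/
def IsHomogOfDeg (θ : Der K ℓ) (d : ℕ) : Prop :=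
  ∀ c : Fin ℓ → K, (θ (linForm c)).IsHomogeneous d

/-- `θ₁, …, θ_ℓ` form a basis of the `S`-module `D(A,m)`. -/
def IsDerBasis (A : Arrangement K ℓ) (m : (Fin ℓ → K) → ℕ) (θ : Fin ℓ → Der K ℓ) : Prop :=
  (∀ i, IsLogDer A m (θ i)) ∧
  ∀ η : Der K ℓ, IsLogDer A m η → ∃! f : Fin ℓ → S K ℓ, η = ∑ i, f i • θ i

/-- `(A,m)` is free with a homogeneous basis of degrees (exponents) `d`. -/
def IsFreeWithExp (A : Arrangement K ℓ) (m : (Fin ℓ → K) → ℕ) (d : Fin ℓ → ℕ) : Prop :=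
  ∃ θ : Fin ℓ → Der K ℓ, (∀ i, IsHomogOfDeg (θ i) (d i)) ∧ IsDerBasis A m θ

/-- `(A,m)` is a free multiarrangement. -/
def IsFree (A : Arrangement K ℓ) (m : (Fin ℓ → K) → ℕ) : Prop :=
  ∃ d : Fin ℓ → ℕ, IsFreeWithExp A m d

/-- `|m|`, the total multiplicity. -/
def msum (A : Arrangement K ℓ) (m : (Fin ℓ → K) → ℕ) : ℕ := ∑ c ∈ A.hyps, m c

/-- The rank of an arrangement: the dimension of the span of its covectors. -/
noncomputable def rank (A : Arrangement K ℓ) : ℕ :=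
  Module.finrank K (Submodule.span K (A.hyps : Set (Fin ℓ → K)))

/-- `A` is reducible: after a linear change of coordinates it is a product of two
arrangements in complementary (nonzero) subspaces.  In terms of covectors: the
covectors split between two complementary nonzero subspaces of the dual space. -/
def Reducible (A : Arrangement K ℓ) : Prop :=
  ∃ W₁ W₂ : Submodule K (Fin ℓ → K), W₁ ≠ ⊥ ∧ W₂ ≠ ⊥ ∧ W₁ ⊓ W₂ = ⊥ ∧ W₁ ⊔ W₂ = ⊤ ∧
    ∀ c ∈ A.hyps, c ∈ W₁ ∨ c ∈ W₂

/-- The hyperplanes of the localization at a flat; the flat of codimension `r` is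
encoded by the `r`-dimensional subspace `U` of the dual space spanned by the
covectors of the hyperplanes containing it. -/
noncomputable def locHyps (A : Arrangement K ℓ) (U : Submodule K (Fin ℓ → K)) :
    Finset (Fin ℓ → K) :=
  A.hyps.filter (· ∈ U)

/-- `U` encodes a flat of `A` of codimension `r` (an element of `L_r(A)`). -/
def IsFlatOfRank (A : Arrangement K ℓ) (U : Submodule K (Fin ℓ → K)) (r : ℕ) : Prop :=
  Module.finrank K U = r ∧ Submodule.span K (locHyps A U : Set (Fin ℓ → K)) = U

/-- The localization `A_X` of `A` at the flat encoded by `U`. -/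
noncomputable def localize (A : Arrangement K ℓ) (U : Submodule K (Fin ℓ → K)) :
    Arrangement K ℓ where
  hyps := locHyps A U
  ne_zero := fun c hc => A.ne_zero c (Finset.mem_filter.mp hc).1
  nonparallel := fun c hc c' hc' =>
    A.nonparallel c (Finset.mem_filter.mp hc).1 c' (Finset.mem_filter.mp hc').1

/-- `H₀` (given by covector `c₀`) is a heavy hyperplane of `(A,m)`. -/
def IsHeavy (A : Arrangement K ℓ) (m : (Fin ℓ → K) → ℕ) (c₀ : Fin ℓ → K) : Prop :=
  c₀ ∈ A.hyps ∧ (∑ c ∈ A.hyps.erase c₀, m c) ≤ m c₀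

/-- `H₀` (given by covector `c₀`) is a locally heavy hyperplane of `(A,m)`. -/
def IsLocallyHeavy (A : Arrangement K ℓ) (m : (Fin ℓ → K) → ℕ) (c₀ : Fin ℓ → K) : Prop :=
  c₀ ∈ A.hyps ∧ ∀ U : Submodule K (Fin ℓ → K), IsFlatOfRank A U 2 → c₀ ∈ U →
    3 ≤ (locHyps A U).card → (∑ c ∈ (locHyps A U).erase c₀, m c) ≤ m c₀

/-- `b` is the second Betti number of the rank-2 localization of `(A,m)` at `U`:
the product of the nonzero exponents of this free rank-2 multiarrangement. -/
def IsLocalB2 (A : Arrangement K ℓ) (m : (Fin ℓ → K) → ℕ)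
    (U : Submodule K (Fin ℓ → K)) (b : ℕ) : Prop :=
  ∃ d : Fin ℓ → ℕ, IsFreeWithExp (localize A U) m d ∧
    b = ∏ i ∈ Finset.univ.filter (fun i => d i ≠ 0), d i

/-- `b` is the second Betti number `b₂(A,m)` of the multiarrangement `(A,m)`. -/
def IsB2 (A : Arrangement K ℓ) (m : (Fin ℓ → K) → ℕ) (b : ℕ) : Prop :=
  ∃ bloc : Submodule K (Fin ℓ → K) → ℕ,
    (∀ U, IsFlatOfRank A U 2 → IsLocalB2 A m U (bloc U)) ∧
    b = ∑ᶠ U ∈ {U : Submodule K (Fin ℓ → K) | IsFlatOfRank A U 2}, bloc U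

/-- The second Betti number of a simple arrangement:
`b₂(A) = Σ_{X ∈ L₂(A)} (|A_X| - 1)`. -/
noncomputable def b2Simple (A : Arrangement K ℓ) : ℕ :=
  ∑ᶠ U ∈ {U : Submodule K (Fin ℓ → K) | IsFlatOfRank A U 2}, ((locHyps A U).card - 1)

/-- The Euler–Ziegler multiplicity of the restricted hyperplane `H₀ ∩ ker(c)` of
`A^{H₀}`: `m^{H₀}(X) = |m_X| - m(H₀)`. -/
noncomputable def EZmult (A : Arrangement K ℓ) (m : (Fin ℓ → K) → ℕ)
    (c₀ c : Fin ℓ → K) : ℕ :=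
  (∑ c' ∈ A.hyps.filter (· ∈ Submodule.span K ({c₀, c} : Set (Fin ℓ → K))), m c') - m c₀

/-- Two covectors are parallel (define the same hyperplane). -/
def Parallel {n : ℕ} (b b' : Fin n → K) : Prop := ∃ t : K, t ≠ 0 ∧ b' = t • b

/-- The covector on `K^n` obtained by restricting the covector `c` on `K^{n+1}` to the
hyperplane `ker c₀`, transported by the linear isomorphism `e : ker c₀ ≃ K^n`. -/
noncomputable def resCov {n : ℕ} (c₀ : Fin (n+1) → K)
    (e : ↥(LinearMap.ker (toFunc c₀)) ≃ₗ[K] (Fin n → K)) (c : Fin (n+1) → K) :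
    Fin n → K :=
  fun j => toFunc c ((e.symm (Pi.single j 1) : ↥(LinearMap.ker (toFunc c₀))) : Fin (n+1) → K)

/-- `(B, mB)` is (a model, in coordinates, of) the Euler–Ziegler restriction
`(A^{H₀}, m^{H₀})` of `(A,m)` to the hyperplane `H₀ = ker c₀ ∈ A`. -/
def IsEZRes {n : ℕ} (A : Arrangement K (n+1)) (m : (Fin (n+1) → K) → ℕ)
    (c₀ : Fin (n+1) → K) (B : Arrangement K n) (mB : (Fin n → K) → ℕ) : Prop :=
  c₀ ∈ A.hyps ∧
  ∃ e : ↥(LinearMap.ker (toFunc c₀)) ≃ₗ[K] (Fin n → K),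
    (∀ c ∈ A.hyps.erase c₀, ∃ b ∈ B.hyps,
        Parallel b (resCov c₀ e c) ∧ mB b = EZmult A m c₀ c) ∧
    (∀ b ∈ B.hyps, ∃ c ∈ A.hyps.erase c₀, Parallel b (resCov c₀ e c))

/-- A combinatorial equivalence between two arrangements: a bijection between the
hyperplanes inducing an isomorphism of intersection lattices (it preserves the rank
of every subset of hyperplanes). -/
def CombEquiv (A A' : Arrangement K ℓ) : Prop :=
  ∃ φ : (Fin ℓ → K) → (Fin ℓ → K), Set.BijOn φ ↑A.hyps ↑A'.hyps ∧
    ∀ T : Finset (Fin ℓ → K), T ⊆ A.hyps →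
      Module.finrank K (Submodule.span K (T : Set (Fin ℓ → K))) =
      Module.finrank K (Submodule.span K ((T.image φ) : Set (Fin ℓ → K)))

section Algebra

lemma add_pow_succ_le {α : Type*} [IdemCommSemiring α] (a b : α) (k : ℕ) :
    (a + b) ^ (k + 1) ≤ a * (a + b) ^ k + b ^ (k + 1) := by
  induction k with
  | zero => simp
  | succ k ih =>
    have hb : b * (a + b) ^ k ≤ (a + b) ^ (k + 1) := by
      rw [pow_succ']
      gcongr
      simp
    calc (a + b) ^ (k + 2)
        = a * (a + b) ^ (k + 1) + b * (a + b) ^ (k + 1) := by ring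
      _ ≤ a * (a + b) ^ (k + 1) + b * (a * (a + b) ^ k + b ^ (k + 1)) := by gcongr
      _ = a * (a + b) ^ (k + 1) + (a * (b * (a + b) ^ k) + b ^ (k + 2)) := by ring
      _ ≤ a * (a + b) ^ (k + 1) + (a * (a + b) ^ (k + 1) + b ^ (k + 2)) := by gcongr
      _ = a * (a + b) ^ (k + 1) + b ^ (k + 2) := by rw [← add_assoc, add_idem]

lemma map_ite_mem_univ_val {ι α β : Type*} [Fintype ι] [DecidableEq α] {b : ι → α}
    (hb : b.Injective) {s : Finset α} (hs : (s : Set α) ⊆ Set.range b) (m : α → β) (z : β) :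
    Finset.univ.val.map (fun i => if b i ∈ s then m (b i) else z) =
      s.val.map m + Multiset.replicate (Fintype.card ι - s.card) z := by
  set t : Finset ι := {i | b i ∈ s} with ht
  have hts : t.map ⟨b, hb⟩ = s := by
    ext x
    simp only [ht, Finset.mem_map, Finset.mem_filter, Finset.mem_univ, true_and,
      Function.Embedding.coeFn_mk]
    refine ⟨fun ⟨_, hi, hix⟩ => hix ▸ hi, fun hx => ?_⟩
    obtain ⟨i, rfl⟩ := hs hx
    exact ⟨i, hx, rfl⟩
  have hin : t.val.map (fun i => if b i ∈ s then m (b i) else z) = s.val.map m := by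
    rw [← hts, Finset.map_val, Multiset.map_map]
    exact Multiset.map_congr rfl fun _ hi => by simp_all
  have hout : tᶜ.val.map (fun i => if b i ∈ s then m (b i) else z) =
      Multiset.replicate (Fintype.card ι - s.card) z := by
    rw [← hts, Finset.card_map, ← Finset.card_compl, ← Finset.card_val, ← Multiset.map_const']
    exact Multiset.map_congr rfl fun _ hi => by simp_all
  rw [← hin, ← hout, ← Multiset.map_add, ← Finset.union_compl t,
    ← Finset.disjUnion_eq_union _ _ disjoint_compl_right, Finset.disjUnion_val]

section CommRing

variable {ι R M : Type*} [CommRing R] [AddCommGroup M] [Module R M]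

lemma span_range_add_smul_eq (v : ι → M) {a : ι → R} {i : ι} (ha : a i = 0) :
    Submodule.span R (Set.range (v + (a · • v i))) = Submodule.span R (Set.range v) := by
  rw [← Finsupp.range_linearCombination, ← Finsupp.range_linearCombination,
    ← Finsupp.linearCombination_comp_addSingleEquiv i a ha, LinearEquiv.range_comp]

lemma linearIndependent_smul_of_ne_zero [NoZeroDivisors R] {v : ι → M}
    (hv : LinearIndependent R v) {a : ι → R} (ha : ∀ i, a i ≠ 0) :
    LinearIndependent R fun i => a i • v i := by
  rw [linearIndependent_iff'] at hv ⊢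
  intro s f hf i hi
  simp only [smul_smul] at hf
  exact (mul_eq_zero.mp (hv s _ hf i hi)).resolve_right (ha i)

lemma span_range_smul_eq [Fintype ι] {v : ι → M} {a : ι → R} {N : Submodule R M}
    (hN : N ≤ Submodule.span R (Set.range v))
    (h : ∀ f : ι → R, ∑ i, f i • v i ∈ N ↔ ∀ i, a i ∣ f i) :
    Submodule.span R (Set.range fun i => a i • v i) = N := by
  refine le_antisymm (Submodule.span_le.mpr ?_) fun x hx => ?_
  · rintro _ ⟨i, rfl⟩
    have hi := (h (Pi.single i (a i))).mpr fun j => by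
      rcases eq_or_ne j i with rfl | hij <;> simp [*]
    simpa [Pi.single_apply, ite_smul] using hi
  · obtain ⟨f, rfl⟩ := (Submodule.mem_span_range_iff_exists_fun R).mp (hN hx)
    choose g hg using (h f).mp hx
    exact (Submodule.mem_span_range_iff_exists_fun R).mpr
      ⟨g, Finset.sum_congr rfl fun i _ => by rw [hg, mul_comm, mul_smul]⟩

end CommRing

section Field

variable {V : Type*} [AddCommGroup V] [Module K V]

lemma exists_eq_span_pair_of_finrank_eq_two {U : Submodule K V} (hU : Module.finrank K U = 2)
    {x : V} (hx : x ∈ U) (hx₀ : x ≠ 0) :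
    ∃ y, y ∉ K ∙ x ∧ U = Submodule.span K {x, y} := by
  have : Module.Finite K U := Module.finite_of_finrank_eq_succ hU
  have hlt : K ∙ x < U := by
    refine lt_of_le_of_ne ((Submodule.span_singleton_le_iff_mem x U).mpr hx) ?_
    rintro rfl
    simp [finrank_span_singleton hx₀] at hU
  obtain ⟨y, hyU, hy⟩ := SetLike.exists_of_lt hlt
  have hle : Submodule.span K {x, y} ≤ U :=
    Submodule.span_le.mpr (Set.pair_subset hx hyU)
  have : Module.Finite K (Submodule.span K {x, y}) := Submodule.finiteDimensional_of_le hle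
  have hlt' : K ∙ x < Submodule.span K {x, y} :=
    lt_of_le_of_ne (Submodule.span_mono (by simp)) fun h => hy (h ▸ Submodule.subset_span (by simp))
  have := Submodule.finrank_lt_finrank_of_lt hlt'
  rw [finrank_span_singleton hx₀] at this
  exact ⟨y, hy, (Submodule.eq_of_le_of_finrank_le hle (by omega)).symm⟩

lemma exists_basis_subset_range {ι : Type*} (b₀ : Module.Basis ι K V) {s : Set V}
    (hs : LinearIndepOn K id s) : ∃ b : Module.Basis ι K V, s ⊆ Set.range b := by
  let b := Module.Basis.extend hs
  refine ⟨b.reindex (b.indexEquiv b₀), ?_⟩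
  rw [Module.Basis.range_reindex, Module.Basis.range_extend]
  exact hs.subset_extend _

end Field

end Algebra

section LinearForms

/-- `linForm` as a linear map, for transporting linear algebra of covectors to the degree-one part
of the coordinate ring. -/
noncomputable def linFormHom : (Fin ℓ → K) →ₗ[K] S K ℓ where
  toFun := linForm
  map_add' c c' := by simp [linForm, add_mul, Finset.sum_add_distrib]
  map_smul' t c := by simp [linForm, Finset.mul_sum, mul_assoc, smul_eq_C_mul]

lemma linFormHom_single (i : Fin ℓ) : linFormHom (Pi.single i (1 : K)) = X i := by
  change linForm _ = _
  rw [linForm, Finset.sum_eq_single i] <;> simp +contextual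

lemma isHomogeneous_linForm (c : Fin ℓ → K) : (linForm c).IsHomogeneous 1 :=
  IsHomogeneous.sum _ _ _ fun _ _ => isHomogeneous_C_mul_X _ _

lemma eval_linForm (v c : Fin ℓ → K) : eval v (linForm c) = v ⬝ᵥ c := by
  simp [linForm, dotProduct, mul_comm]

lemma exists_eval_linForm {c c' : Fin ℓ → K} (h : c' ∉ K ∙ c) :
    ∃ v : Fin ℓ → K, eval v (linForm c) = 0 ∧ eval v (linForm c') ≠ 0 := by
  obtain ⟨f, hf, hle⟩ := Submodule.exists_le_ker_of_notMem h
  obtain ⟨v, rfl⟩ := (dotProductEquiv K (Fin ℓ)).surjective f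
  refine ⟨v, ?_, ?_⟩
  · simpa [eval_linForm] using hle (Submodule.mem_span_singleton_self c)
  · simpa [eval_linForm] using hf

lemma prime_linForm {c : Fin ℓ → K} (hc : c ≠ 0) : Prime (linForm c) := by
  have h : linForm c = sumSMulX (Finsupp.equivFunOnFinite.symm c) := by
    simp [linForm, sumSMulX, Finsupp.linearCombination_apply, Finsupp.sum_fintype, smul_eq_C_mul]
  obtain ⟨i, hi⟩ := Function.ne_iff.mp hc
  rw [h]
  refine (irreducible_sumSMulX _ ⟨i, by simpa using hi⟩ fun r hr => ?_).prime
  exact isUnit_iff_ne_zero.mpr fun hr₀ => hi (by simpa [hr₀] using hr i)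

end LinearForms

section Forms

/-- `Sym^k U` inside the coordinate ring: the forms of degree `k` in the linear forms with covector
in `U`, encoded as the `k`-th power of the space of these linear forms. -/
noncomputable def forms (U : Submodule K (Fin ℓ → K)) (k : ℕ) : Submodule K (S K ℓ) :=
  U.map linFormHom ^ k

variable {U : Submodule K (Fin ℓ → K)} {c c' v : Fin ℓ → K} {p p₀ : S K ℓ} {j k n : ℕ}

lemma mem_forms_zero : p ∈ forms U 0 ↔ ∃ a : K, p = C a := by
  simp [forms, Submodule.mem_one, algebraMap_eq, eq_comm]

lemma linForm_pow_mem_forms (hc : c ∈ U) (k : ℕ) : linForm c ^ k ∈ forms U k :=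
  Submodule.pow_mem_pow _ (Submodule.mem_map_of_mem (f := linFormHom) hc) k

lemma mul_mem_forms (hp : p ∈ forms U j) (hp₀ : p₀ ∈ forms U k) : p * p₀ ∈ forms U (j + k) := by
  rw [forms, pow_add]
  exact Submodule.mul_mem_mul hp hp₀

lemma isHomogeneous_of_mem_forms (hp : p ∈ forms U k) : p.IsHomogeneous k := by
  have hle : U.map linFormHom ≤ homogeneousSubmodule (Fin ℓ) K 1 :=
    Submodule.map_le_iff_le_comap.mpr fun c _ => isHomogeneous_linForm c
  have := pow_le_pow_left' hle k hp
  rwa [homogeneousSubmodule_one_pow] at this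

lemma exists_eq_linForm_mul_add_of_mem_forms (hp : p ∈ forms (Submodule.span K {c, c'}) (k + 1)) :
    ∃ q ∈ forms (Submodule.span K {c, c'}) k, ∃ a : K,
      p = linForm c * q + C a * linForm c' ^ (k + 1) := by
  have hspan : (Submodule.span K {c, c'}).map linFormHom = K ∙ linForm c + K ∙ linForm c' := by
    rw [Submodule.map_span, Set.image_pair, Submodule.span_insert]
    rfl
  rw [forms, hspan] at hp ⊢
  obtain ⟨_, hu, _, hr, rfl⟩ :=
    Submodule.mem_sup.mp (SetLike.le_def.mp (add_pow_succ_le _ _ k) hp)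
  obtain ⟨q, hq, rfl⟩ := Submodule.mem_span_singleton_mul.mp hu
  rw [Submodule.span_pow, Set.singleton_pow] at hr
  obtain ⟨a, rfl⟩ := Submodule.mem_span_singleton.mp hr
  exact ⟨q, hq, a, by rw [smul_eq_C_mul]⟩

lemma linForm_dvd_of_mem_forms (hc : eval v (linForm c) = 0) (hc' : eval v (linForm c') ≠ 0)
    (hp : p ∈ forms (Submodule.span K {c, c'}) k) (hv : eval v p = 0) : linForm c ∣ p := by
  cases k with
  | zero =>
    obtain ⟨a, rfl⟩ := mem_forms_zero.mp hp
    simp_all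
  | succ k =>
    obtain ⟨q, -, a, rfl⟩ := exists_eq_linForm_mul_add_of_mem_forms hp
    have ha : a = 0 := by simpa [hc, hc'] using hv
    simp [ha]

lemma eq_zero_or_mem_forms_of_linForm_mul_mem (hc₀ : c ≠ 0) (hc : eval v (linForm c) = 0)
    (hc' : eval v (linForm c') ≠ 0) (hp : linForm c * p ∈ forms (Submodule.span K {c, c'}) k) :
    p = 0 ∨ ∃ j, k = j + 1 ∧ p ∈ forms (Submodule.span K {c, c'}) j := by
  have hα : linForm c ≠ 0 := (prime_linForm hc₀).ne_zero
  cases k with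
  | zero =>
    obtain ⟨a, ha⟩ := mem_forms_zero.mp hp
    have ha₀ : 0 = a := by simpa [hc] using congrArg (eval v) ha
    refine Or.inl ((mul_eq_zero.mp ?_).resolve_left hα)
    rw [ha, ← ha₀, C_0]
  | succ k =>
    obtain ⟨q, hq, a, hqa⟩ := exists_eq_linForm_mul_add_of_mem_forms hp
    have ha : a = 0 := by simpa [hc, hc'] using congrArg (eval v) hqa
    have hpq : p = q := mul_left_cancel₀ hα (by simpa [ha] using hqa)
    exact Or.inr ⟨k, rfl, hpq ▸ hq⟩

lemma eq_zero_or_mem_forms_of_linForm_pow_mul_mem (hc₀ : c ≠ 0) (hc : eval v (linForm c) = 0)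
    (hc' : eval v (linForm c') ≠ 0) (hp : linForm c ^ n * p ∈ forms (Submodule.span K {c, c'}) k) :
    p = 0 ∨ ∃ j, k = j + n ∧ p ∈ forms (Submodule.span K {c, c'}) j := by
  induction n generalizing k with
  | zero => exact Or.inr ⟨k, rfl, by simpa using hp⟩
  | succ n ih =>
    rw [pow_succ', mul_assoc] at hp
    rcases eq_zero_or_mem_forms_of_linForm_mul_mem hc₀ hc hc' hp with h₀ | ⟨i, rfl, hi⟩
    · exact Or.inl ((mul_eq_zero.mp h₀).resolve_left (pow_ne_zero _ (prime_linForm hc₀).ne_zero))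
    · exact (ih hi).imp_right fun ⟨j, hij, hj⟩ => ⟨j, by rw [hij, add_assoc], hj⟩

lemma exists_mem_forms_linForm_pow_succ_dvd_sub (hU : Module.finrank K U = 2) (hcU : c ∈ U)
    (hc₀ : c ≠ 0) (hp : p ∈ forms U (j + k)) (hp₀ : p₀ ∈ forms U k) (hdvd : linForm c ^ n ∣ p)
    (hdvd₀ : linForm c ^ n ∣ p₀) (hndvd₀ : ¬ linForm c ^ (n + 1) ∣ p₀) :
    ∃ s ∈ forms U j, linForm c ^ (n + 1) ∣ p - s * p₀ := by
  obtain ⟨c', hcc', rfl⟩ := exists_eq_span_pair_of_finrank_eq_two hU hcU hc₀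
  obtain ⟨v, hc, hc'⟩ := exists_eval_linForm hcc'
  -- On binary forms, divisibility by `linForm c` is vanishing at `v`, so the values at `v` are the
  -- leading coefficients that `s` has to match.
  obtain ⟨g, rfl⟩ := hdvd
  obtain ⟨g₀, rfl⟩ := hdvd₀
  have hndvd : ¬ linForm c ∣ g₀ := fun h => hndvd₀ (by rw [pow_succ]; exact mul_dvd_mul_left _ h)
  obtain ⟨i₀, rfl, hg₀⟩ := (eq_zero_or_mem_forms_of_linForm_pow_mul_mem hc₀ hc hc' hp₀).resolve_left
    (by rintro rfl; simp at hndvd)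
  have hv₀ : eval v g₀ ≠ 0 := fun h => hndvd (linForm_dvd_of_mem_forms hc hc' hg₀ h)
  rcases eq_zero_or_mem_forms_of_linForm_pow_mul_mem hc₀ hc hc' hp with rfl | ⟨i, hi, hg⟩
  · exact ⟨0, Submodule.zero_mem _, by simp⟩
  obtain rfl : i = j + i₀ := by omega
  set a := eval v g / (eval v (linForm c') ^ j * eval v g₀)
  have hs : C a * linForm c' ^ j ∈ forms (Submodule.span K {c, c'}) j := by
    rw [← smul_eq_C_mul]
    exact Submodule.smul_mem _ _ (linForm_pow_mem_forms (Submodule.subset_span (by simp)) j)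
  refine ⟨_, hs, ?_⟩
  have hg_sub : linForm c ∣ g - C a * linForm c' ^ j * g₀ := by
    refine linForm_dvd_of_mem_forms hc hc' (Submodule.sub_mem _ hg (mul_mem_forms hs hg₀)) ?_
    simp only [map_sub, map_mul, map_pow, eval_C, a]
    field_simp
    simp
  rw [mul_left_comm, ← mul_sub, pow_succ]
  exact mul_dvd_mul_left _ hg_sub

end Forms

section Derivations

variable {U : Submodule K (Fin ℓ → K)} {d j : ℕ} {s : S K ℓ} {θ : Der K ℓ}

lemma sum_smul_der_apply (f : Fin ℓ → S K ℓ) (θ : Fin ℓ → Der K ℓ) (p : S K ℓ) :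
    (∑ i, f i • θ i : Der K ℓ) p = ∑ i, f i * θ i p := by
  rw [← Derivation.coeFnAddMonoidHom_apply, map_sum, Finset.sum_apply]
  rfl

lemma der_ext_linForm (b : Module.Basis (Fin ℓ) K (Fin ℓ → K)) {η : Der K ℓ}
    (h : ∀ i, θ (linForm (b i)) = η (linForm (b i))) : θ = η := by
  have hlin : θ.toLinearMap ∘ₗ linFormHom = η.toLinearMap ∘ₗ linFormHom := b.ext h
  refine derivation_ext fun i => ?_
  rw [← linFormHom_single]
  exact LinearMap.congr_fun hlin _

/-- The constant derivations `∂/∂α_i`, where the `α_i` are the linear forms of a basis of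
covectors. -/
noncomputable def dualDer (b : Module.Basis (Fin ℓ) K (Fin ℓ → K)) (i : Fin ℓ) : Der K ℓ :=
  mkDerivation K fun k => C (b.coord i (Pi.single k 1))

variable (b : Module.Basis (Fin ℓ) K (Fin ℓ → K))

lemma dualDer_linForm (i : Fin ℓ) (c : Fin ℓ → K) :
    dualDer b i (linForm c) = C (b.coord i c) := by
  have hlin : (dualDer b i).toLinearMap ∘ₗ linFormHom =
      Algebra.linearMap K (S K ℓ) ∘ₗ b.coord i :=
    (Pi.basisFun K (Fin ℓ)).ext fun k => by
      simp [dualDer, linFormHom_single, mkDerivation_X, algebraMap_eq]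
  exact LinearMap.congr_fun hlin c

lemma sum_smul_dualDer_linForm (f : Fin ℓ → S K ℓ) (i : Fin ℓ) :
    (∑ j, f j • dualDer b j : Der K ℓ) (linForm (b i)) = f i := by
  simp [sum_smul_der_apply, dualDer_linForm, Finsupp.single_apply]

lemma linearIndependent_dualDer : LinearIndependent (S K ℓ) (dualDer b) :=
  Fintype.linearIndependent_iff.mpr fun f hf i => by
    rw [← sum_smul_dualDer_linForm b f i, hf, Derivation.zero_apply]

lemma span_range_dualDer : Submodule.span (S K ℓ) (Set.range (dualDer b)) = ⊤ :=
  eq_top_iff.mpr fun η _ => (Submodule.mem_span_range_iff_exists_fun _).mpr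
    ⟨fun i => η (linForm (b i)), der_ext_linForm b (sum_smul_dualDer_linForm b _)⟩

/-- The derivations whose coefficients are forms of degree `d` in the linear forms with covector in
`U`. Unlike homogeneity alone, this keeps the coefficients binary forms when `U` is a plane. -/
noncomputable def formDer (U : Submodule K (Fin ℓ → K)) (d : ℕ) : Submodule K (Der K ℓ) where
  carrier := {θ | ∀ c, θ (linForm c) ∈ forms U d}
  add_mem' hθ hη c := Submodule.add_mem _ (hθ c) (hη c)
  zero_mem' _ := Submodule.zero_mem _
  smul_mem' a _ hθ c := Submodule.smul_mem _ a (hθ c)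

lemma isHomogOfDeg_of_mem_formDer (hθ : θ ∈ formDer U d) : IsHomogOfDeg θ d :=
  fun c => isHomogeneous_of_mem_forms (hθ c)

lemma smul_mem_formDer (hs : s ∈ forms U j) (hθ : θ ∈ formDer U d) : s • θ ∈ formDer U (j + d) :=
  fun c => mul_mem_forms hs (hθ c)

lemma dualDer_mem_formDer (U : Submodule K (Fin ℓ → K)) (i : Fin ℓ) :
    dualDer b i ∈ formDer U 0 :=
  fun c => mem_forms_zero.mpr ⟨_, dualDer_linForm b i c⟩

end Derivations

section LogarithmicDerivations

variable {A : Arrangement K ℓ} {m : (Fin ℓ → K) → ℕ} {θ : Fin ℓ → Der K ℓ}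

/-- The module `D(A,m)` of logarithmic derivations. -/
def logDer (A : Arrangement K ℓ) (m : (Fin ℓ → K) → ℕ) : Submodule (S K ℓ) (Der K ℓ) where
  carrier := {θ | IsLogDer A m θ}
  add_mem' hθ hη c hc := dvd_add (hθ c hc) (hη c hc)
  zero_mem' _ _ := dvd_zero _
  smul_mem' s _ hθ c hc := (hθ c hc).mul_left s

lemma isDerBasis_iff : IsDerBasis A m θ ↔ LinearIndependent (S K ℓ) θ ∧
    Submodule.span (S K ℓ) (Set.range θ) = logDer A m := by
  constructor
  · rintro ⟨hlog, hbasis⟩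
    refine ⟨Fintype.linearIndependent_iff.mpr fun f hf => ?_, le_antisymm ?_ fun η hη => ?_⟩
    · exact congrFun ((hbasis 0 (logDer A m).zero_mem).unique (y₂ := 0) hf.symm (by simp))
    · exact Submodule.span_le.mpr (Set.range_subset_iff.mpr hlog)
    · obtain ⟨f, rfl, -⟩ := hbasis η hη
      exact (Submodule.mem_span_range_iff_exists_fun _).mpr ⟨f, rfl⟩
  · rintro ⟨hli, hspan⟩
    refine ⟨fun i => hspan.le (Submodule.subset_span ⟨i, rfl⟩), fun η hη => ?_⟩
    obtain ⟨f, rfl⟩ := (Submodule.mem_span_range_iff_exists_fun _).mp (hspan.ge hη)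
    exact ⟨f, rfl, fun g hg =>
      funext fun i => (Fintype.linearIndependent_iffₛ.mp hli f g hg i).symm⟩

lemma isDerBasis_smul (hθ : LinearIndependent (S K ℓ) θ)
    (hspan : logDer A m ≤ Submodule.span (S K ℓ) (Set.range θ)) {a : Fin ℓ → S K ℓ}
    (ha : ∀ i, a i ≠ 0) (h : ∀ f : Fin ℓ → S K ℓ, ∑ i, f i • θ i ∈ logDer A m ↔ ∀ i, a i ∣ f i) :
    IsDerBasis A m fun i => a i • θ i :=
  isDerBasis_iff.mpr ⟨linearIndependent_smul_of_ne_zero hθ ha, span_range_smul_eq hspan h⟩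

lemma isDerBasis_smul_dualDer (b : Module.Basis (Fin ℓ) K (Fin ℓ → K)) {n : Fin ℓ → ℕ}
    (h : ∀ η : Der K ℓ, IsLogDer A m η ↔ ∀ i, linForm (b i) ^ n i ∣ η (linForm (b i))) :
    IsDerBasis A m fun i => linForm (b i) ^ n i • dualDer b i :=
  isDerBasis_smul (linearIndependent_dualDer b) (by simp [span_range_dualDer])
    (fun i => pow_ne_zero _ (prime_linForm (b.ne_zero i)).ne_zero)
    fun f => (h _).trans (by simp only [sum_smul_dualDer_linForm])

lemma IsDerBasis.sub_smul (hθ : IsDerBasis A m θ) {s : Fin ℓ → S K ℓ} {i₀ : Fin ℓ}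
    (hs : s i₀ = 0) : IsDerBasis A m fun i => θ i - s i • θ i₀ := by
  have hs' : (-s) i₀ = 0 := by simp [hs]
  have heq : (fun i => θ i - s i • θ i₀) = θ + ((-s) · • θ i₀) := by
    funext i
    exact (sub_eq_add_neg _ _).trans (congrArg _ (neg_smul (s i) (θ i₀)).symm)
  rw [isDerBasis_iff] at hθ ⊢
  rw [heq]
  exact ⟨(linearIndependent_add_smul_iff hs').mpr hθ.1,
    (span_range_add_smul_eq θ hs').trans hθ.2⟩

lemma isLogDer_add_single_iff {c : Fin ℓ → K} (hc : c ∈ A.hyps) {η : Der K ℓ} :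
    IsLogDer A (m + Pi.single c 1) η ↔
      IsLogDer A m η ∧ linForm c ^ (m c + 1) ∣ η (linForm c) := by
  constructor
  · exact fun h => ⟨fun x hx => (pow_dvd_pow _ (by simp)).trans (h x hx), by simpa using h c hc⟩
  · rintro ⟨h, h'⟩ x hx
    rcases eq_or_ne x c with rfl | hne
    · simpa using h'
    · simpa [hne] using h x hx

lemma IsDerBasis.add_single_of_forall_dvd (hθ : IsDerBasis A m θ) {c : Fin ℓ → K}
    (hc : c ∈ A.hyps) (h : ∀ i, linForm c ^ (m c + 1) ∣ θ i (linForm c)) :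
    IsDerBasis A (m + Pi.single c 1) θ :=
  ⟨fun i => (isLogDer_add_single_iff hc).mpr ⟨hθ.1 i, h i⟩,
    fun η hη => hθ.2 η ((isLogDer_add_single_iff hc).mp hη).1⟩

lemma sum_smul_isLogDer_add_single_iff (hθ : ∀ i, IsLogDer A m (θ i)) {c : Fin ℓ → K}
    (hc : c ∈ A.hyps) {i₀ : Fin ℓ} (h : ∀ i, linForm c ^ (m c + 1) ∣ θ i (linForm c) ↔ i ≠ i₀)
    (f : Fin ℓ → S K ℓ) :
    IsLogDer A (m + Pi.single c 1) (∑ i, f i • θ i) ↔ linForm c ∣ f i₀ := by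
  have hlog : IsLogDer A m (∑ i, f i • θ i) :=
    (logDer A m).sum_mem fun i _ => (logDer A m).smul_mem _ (hθ i)
  have hrest : linForm c ^ (m c + 1) ∣ ∑ i ∈ Finset.univ.erase i₀, f i * θ i (linForm c) :=
    Finset.dvd_sum fun i hi => ((h i).mpr (Finset.ne_of_mem_erase hi)).mul_left _
  rw [isLogDer_add_single_iff hc, and_iff_right hlog, sum_smul_der_apply,
    ← Finset.add_sum_erase _ _ (Finset.mem_univ i₀), dvd_add_left hrest]
  refine ⟨fun hdvd => ?_, fun hdvd => ?_⟩
  · have := succ_dvd_or_succ_dvd_of_succ_sum_dvd_mul (prime_linForm (A.ne_zero c hc)) (k := 0)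
      (one_dvd (f i₀)) (hθ i₀ c hc) (by simpa using hdvd)
    simpa using this.resolve_right (by simp [h])
  · rw [pow_succ']
    exact mul_dvd_mul hdvd (hθ i₀ c hc)

lemma IsDerBasis.add_single (hθ : IsDerBasis A m θ) {c : Fin ℓ → K} (hc : c ∈ A.hyps)
    {i₀ : Fin ℓ} (h : ∀ i, linForm c ^ (m c + 1) ∣ θ i (linForm c) ↔ i ≠ i₀) :
    IsDerBasis A (m + Pi.single c 1)
      fun i => linForm c ^ (Pi.single i₀ 1 : Fin ℓ → ℕ) i • θ i := by
  obtain ⟨hli, hspan⟩ := isDerBasis_iff.mp hθ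
  refine isDerBasis_smul hli (fun η hη => hspan.ge ((isLogDer_add_single_iff hc).mp hη).1)
    (fun i => pow_ne_zero _ (prime_linForm (A.ne_zero c hc)).ne_zero) fun f => ?_
  refine (sum_smul_isLogDer_add_single_iff hθ.1 hc h f).trans ⟨fun hf i => ?_, fun hf => ?_⟩
  · rcases eq_or_ne i i₀ with rfl | hi <;> simp [*]
  · simpa using hf i₀

end LogarithmicDerivations

section Freeness

variable {A : Arrangement K ℓ} {m : (Fin ℓ → K) → ℕ} {U : Submodule K (Fin ℓ → K)}
  {d : Fin ℓ → ℕ} {θ : Fin ℓ → Der K ℓ}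

lemma isFreeWithExp_of_isLogDer_iff (b : Module.Basis (Fin ℓ) K (Fin ℓ → K))
    (h : ∀ η : Der K ℓ, IsLogDer A m η ↔ ∀ i, linForm (b i) ^ d i ∣ η (linForm (b i))) :
    IsFreeWithExp A m d := by
  refine ⟨_, fun i => ?_, isDerBasis_smul_dualDer b h⟩
  have hform := smul_mem_formDer (linForm_pow_mem_forms (Submodule.mem_top (x := b i)) (d i))
    (dualDer_mem_formDer b ⊤ i)
  exact isHomogOfDeg_of_mem_formDer hform

lemma exists_isFreeWithExp_of_linearIndepOn
    (hA : LinearIndepOn K id (A.hyps : Set (Fin ℓ → K))) (m : (Fin ℓ → K) → ℕ) :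
    ∃ d : Fin ℓ → ℕ, IsFreeWithExp A m d ∧
      Finset.univ.val.map d = A.hyps.val.map m + Multiset.replicate (ℓ - A.hyps.card) 0 := by
  obtain ⟨b, hb⟩ := exists_basis_subset_range (Pi.basisFun K (Fin ℓ)) hA
  let d : Fin ℓ → ℕ := fun i => if b i ∈ A.hyps then m (b i) else 0
  have hlog : ∀ η : Der K ℓ, IsLogDer A m η ↔ ∀ i, linForm (b i) ^ d i ∣ η (linForm (b i)) := by
    refine fun η => ⟨fun h i => ?_, fun h c hc => ?_⟩
    · by_cases hi : b i ∈ A.hyps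
      · simpa [d, hi] using h (b i) hi
      · simp [d, hi]
    · obtain ⟨i, rfl⟩ := hb hc
      simpa [d, show b i ∈ A.hyps from hc] using h i
  have hexp := map_ite_mem_univ_val b.injective hb m 0
  rw [Fintype.card_fin] at hexp
  exact ⟨d, isFreeWithExp_of_isLogDer_iff b hlog, hexp⟩

/-- A basis of `D(A,m)` with coefficients in `Sym U`: the invariant of the induction on `|m|`. -/
structure IsFormBasis (U : Submodule K (Fin ℓ → K)) (A : Arrangement K ℓ)
    (m : (Fin ℓ → K) → ℕ) (d : Fin ℓ → ℕ) (θ : Fin ℓ → Der K ℓ) : Prop where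
  isDerBasis : IsDerBasis A m θ
  mem_formDer : ∀ i, θ i ∈ formDer U (d i)

lemma isFormBasis_dualDer (U : Submodule K (Fin ℓ → K)) (hm : ∀ c ∈ A.hyps, m c = 0)
    (b : Module.Basis (Fin ℓ) K (Fin ℓ → K)) : IsFormBasis U A m 0 (dualDer b) where
  isDerBasis := by
    simpa using isDerBasis_smul_dualDer (A := A) (m := m) b (n := 0)
      (by simp +contextual [IsLogDer, hm])
  mem_formDer := dualDer_mem_formDer b U

lemma IsFormBasis.exists_forall_dvd_iff_ne (h : IsFormBasis U A m d θ)
    (hU : Module.finrank K U = 2) {c : Fin ℓ → K} (hc : c ∈ A.hyps) (hcU : c ∈ U)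
    (hndvd : ∃ i, ¬ linForm c ^ (m c + 1) ∣ θ i (linForm c)) :
    ∃ θ' i₀, IsFormBasis U A m d θ' ∧
      ∀ i, linForm c ^ (m c + 1) ∣ θ' i (linForm c) ↔ i ≠ i₀ := by
  obtain ⟨i₀, hi₀, hmin⟩ := Finset.exists_min_image
    (Finset.univ.filter fun i => ¬ linForm c ^ (m c + 1) ∣ θ i (linForm c)) d
    (hndvd.imp fun i hi => by simpa using hi)
  simp only [Finset.mem_filter, Finset.mem_univ, true_and] at hi₀ hmin
  have hred : ∀ i, ∃ s : S K ℓ, (i = i₀ → s = 0) ∧ s • θ i₀ ∈ formDer U (d i) ∧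
      (i ≠ i₀ → linForm c ^ (m c + 1) ∣ (θ i - s • θ i₀) (linForm c)) := by
    intro i
    by_cases hi : linForm c ^ (m c + 1) ∣ θ i (linForm c)
    · exact ⟨0, by simp, by simp, fun _ => by simpa using hi⟩
    rcases eq_or_ne i i₀ with rfl | hne
    · exact ⟨0, by simp, by simp, by simp⟩
    obtain ⟨j, hj⟩ := Nat.exists_eq_add_of_le' (hmin i hi)
    obtain ⟨s, hs, hdvd⟩ := exists_mem_forms_linForm_pow_succ_dvd_sub hU hcU (A.ne_zero c hc)
      (hj ▸ h.mem_formDer i c) (h.mem_formDer i₀ c) (h.isDerBasis.1 i c hc)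
      (h.isDerBasis.1 i₀ c hc) hi₀
    exact ⟨s, fun h => absurd h hne, hj ▸ smul_mem_formDer hs (h.mem_formDer i₀), fun _ => hdvd⟩
  choose s hs₀ hs hdvd using hred
  refine ⟨_, i₀, ⟨h.isDerBasis.sub_smul (hs₀ i₀ rfl), fun i =>
    Submodule.sub_mem _ (h.mem_formDer i) (hs i)⟩, fun i => ⟨?_, hdvd i⟩⟩
  rintro hi rfl
  simp [hs₀ i rfl, hi₀] at hi

lemma IsFormBasis.exists_add_single (h : IsFormBasis U A m d θ) (hU : Module.finrank K U = 2)
    {c : Fin ℓ → K} (hc : c ∈ A.hyps) (hcU : c ∈ U) :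
    ∃ d' θ', IsFormBasis U A (m + Pi.single c 1) d' θ' := by
  by_cases hall : ∀ i, linForm c ^ (m c + 1) ∣ θ i (linForm c)
  · exact ⟨d, θ, h.isDerBasis.add_single_of_forall_dvd hc hall, h.mem_formDer⟩
  · obtain ⟨θ', i₀, h', hi₀⟩ := h.exists_forall_dvd_iff_ne hU hc hcU (not_forall.mp hall)
    exact ⟨_, _, h'.isDerBasis.add_single hc hi₀, fun i =>
      smul_mem_formDer (linForm_pow_mem_forms hcU _) (h'.mem_formDer i)⟩

lemma exists_isFormBasis (hU : Module.finrank K U = 2) (hA : ∀ c ∈ A.hyps, c ∈ U)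
    (m : (Fin ℓ → K) → ℕ) : ∃ d θ, IsFormBasis U A m d θ := by
  induction hn : msum A m generalizing m with
  | zero =>
    exact ⟨_, _, isFormBasis_dualDer U (Finset.sum_eq_zero_iff.mp hn) (Pi.basisFun K (Fin ℓ))⟩
  | succ n ih =>
    obtain ⟨c, hc, hmc⟩ : ∃ c ∈ A.hyps, m c ≠ 0 :=
      Finset.exists_ne_zero_of_sum_ne_zero (by rw [← msum, hn]; omega)
    obtain ⟨m', rfl⟩ : ∃ m', m = m' + Pi.single c 1 := by
      refine ⟨m - Pi.single c 1, (tsub_add_cancel_of_le fun x => ?_).symm⟩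
      rcases eq_or_ne x c with rfl | hne
      · simpa [Nat.one_le_iff_ne_zero] using hmc
      · simp [hne]
    obtain ⟨d, θ, h⟩ := ih m' <| by
      simpa [msum, Finset.sum_add_distrib, Finset.sum_pi_single, hc] using hn
    exact h.exists_add_single hU hc (hA c hc)

lemma isFree_of_forall_mem_of_finrank_eq_two (hU : Module.finrank K U = 2)
    (hA : ∀ c ∈ A.hyps, c ∈ U) (m : (Fin ℓ → K) → ℕ) : IsFree A m := by
  obtain ⟨d, θ, h⟩ := exists_isFormBasis hU hA m
  exact ⟨d, θ, fun i => isHomogOfDeg_of_mem_formDer (h.mem_formDer i), h.isDerBasis⟩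

end Freeness

theorem stmt7 (A : Arrangement K ℓ) (m : (Fin ℓ → K) → ℕ)
    (hm : ∀ c ∈ A.hyps, 0 < m c) (hr : rank A = 2) :
    IsFree A m ∧ ∀ c₁ c₂ : Fin ℓ → K, c₁ ≠ c₂ → A.hyps = {c₁, c₂} →
      ∃ d : Fin ℓ → ℕ, IsFreeWithExp A m d ∧
        Finset.univ.val.map d = m c₁ ::ₘ m c₂ ::ₘ Multiset.replicate (ℓ - 2) 0 := by
  refine ⟨isFree_of_forall_mem_of_finrank_eq_two hr (fun c hc => Submodule.subset_span hc) m,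
    fun c₁ c₂ hne hA => ?_⟩
  have hli : LinearIndepOn K id (A.hyps : Set (Fin ℓ → K)) := by
    have h₁ : c₁ ∈ A.hyps := by simp [hA]
    have h₂ : c₂ ∈ A.hyps := by simp [hA]
    rw [hA, Finset.coe_pair]
    exact linearIndepOn_id_pair (A.ne_zero c₁ h₁) fun t ht =>
      A.nonparallel c₁ h₁ c₂ h₂ hne t ht.symm
  obtain ⟨d, hd, hexp⟩ := exists_isFreeWithExp_of_linearIndepOn hli m
  exact ⟨d, hd, by simpa [hA, hne] using hexp⟩

end ArrPaper
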